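/- Let (X,d) be a complete CAT(0) space of finite type and S = {x₁,…,xₙ} ⊆ X a finite subset with nonnegative weights w₁,…,wₙ ∈ [0,1] not all zero. Then the Fréchet mean x* of S (the unique minimizer of F₂(x)=∑ᵢ wᵢ d(x,xᵢ)²) lies in the convex hull co S; in particular, with k = deg_thr S one has x* ∈ thr^k S = co S, so x* is constructible from S in at most 2^k − 1 steps, where each step produces one point lying on a geodesic segment between two previously constructed points. -/

import Mathlib

/-!
The Fréchet functional of a finite set `S` strictly decreases when a point is projected
from outside onto a convex set containing `S`, so its minimizer lies in every convex set that contains `S` and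
admits nearest points. The convex hull `co S` need not be closed in a general CAT(0) space, and
this is where finite type enters: `co S = thrᵏ S` for some finite `k`, and threading preserves
compactness (`isCompact_thr`), since the CAT(0) inequality makes points on geodesics depend
continuously on the endpoints and the parameter. Hence `co S` is compact and nearest points exist.
The decrease is the obtuse-angle inequality `d(p,q)² + d(z,p)² ≤ d(z,q)²`
(`CAT0.dist_sq_add_dist_sq_le`) for `p` a nearest point to `z` in a convex set and `q` in it.

For the step count, a point of `thrᵏ⁺¹ S` lies on a segment between two points of `thrᵏ S`;
concatenating their two constructions and adding one step gives the recursion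
`2 (2ᵏ - 1) + 1 = 2ᵏ⁺¹ - 1`.
-/


open Set

/-- A geodesic from `x` to `y`: an isometric parametrization of `[0, d(x,y)]`. -/
def IsGeodesic {X : Type*} [MetricSpace X] (x y : X) (γ : ℝ → X) : Prop :=
  γ 0 = x ∧ γ (dist x y) = y ∧
    ∀ s ∈ Set.Icc (0 : ℝ) (dist x y), ∀ t ∈ Set.Icc (0 : ℝ) (dist x y),
      dist (γ s) (γ t) = |s - t|

/-- The union of all geodesic segments from `x` to `y` (in a uniquely geodesic
space this is the geodesic segment `[x,y]`). -/
def segs {X : Type*} [MetricSpace X] (x y : X) : Set X :=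
  ⋃ γ ∈ {γ : ℝ → X | IsGeodesic x y γ}, γ '' Set.Icc (0 : ℝ) (dist x y)

/-- A geodesic metric space: every two points are joined by a geodesic. -/
def GeodesicSpace (X : Type*) [MetricSpace X] : Prop :=
  ∀ x y : X, ∃ γ : ℝ → X, IsGeodesic x y γ

/-- A uniquely geodesic metric space. -/
def UniquelyGeodesic (X : Type*) [MetricSpace X] : Prop :=
  GeodesicSpace X ∧ ∀ (x y : X) (γ₁ γ₂ : ℝ → X), IsGeodesic x y γ₁ → IsGeodesic x y γ₂ →
    Set.EqOn γ₁ γ₂ (Set.Icc (0 : ℝ) (dist x y))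

/-- A CAT(0) space: a geodesic space satisfying the quadratic comparison inequality. -/
def CAT0 (X : Type*) [MetricSpace X] : Prop :=
  GeodesicSpace X ∧
    ∀ (x y z : X) (γ : ℝ → X), IsGeodesic x y γ → ∀ t ∈ Set.Icc (0 : ℝ) 1,
      dist (γ (t * dist x y)) z ^ 2 ≤
        (1 - t) * dist x z ^ 2 + t * dist y z ^ 2 - t * (1 - t) * dist x y ^ 2

/-- A flat CAT(0) space: the comparison inequality holds with equality. -/
def FlatCAT0 (X : Type*) [MetricSpace X] : Prop :=
  GeodesicSpace X ∧
    ∀ (x y z : X) (γ : ℝ → X), IsGeodesic x y γ → ∀ t ∈ Set.Icc (0 : ℝ) 1,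
      dist (γ (t * dist x y)) z ^ 2 =
        (1 - t) * dist x z ^ 2 + t * dist y z ^ 2 - t * (1 - t) * dist x y ^ 2

/-- Convexity: a set containing every geodesic segment between its points. -/
def GConvex {X : Type*} [MetricSpace X] (C : Set X) : Prop :=
  ∀ x ∈ C, ∀ y ∈ C, segs x y ⊆ C

/-- The (geodesic) convex hull: the smallest convex set containing `S`. -/
def gconvHull {X : Type*} [MetricSpace X] (S : Set X) : Set X :=
  ⋂₀ {C : Set X | GConvex C ∧ S ⊆ C}

/-- Threading of a set: the union of all geodesic segments with endpoints in `S`. -/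
def thr {X : Type*} [MetricSpace X] (S : Set X) : Set X :=
  ⋃ x ∈ S, ⋃ y ∈ S, segs x y

/-- The threading degree of a set: the smallest `n` with `thrⁿ S = co S` (or `⊤`). -/
noncomputable def thrDeg {X : Type*} [MetricSpace X] (S : Set X) : ℕ∞ :=
  sInf ((fun n : ℕ => (n : ℕ∞)) '' {n : ℕ | thr^[n] S = gconvHull S})

/-- The threading degree of the space: the supremum of the threading degrees of its subsets. -/
noncomputable def thrDegSpace (X : Type*) [MetricSpace X] : ℕ∞ :=
  ⨆ S : Set X, thrDeg S

/-- A space is of finite type if its threading degree is finite. -/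
def FiniteType (X : Type*) [MetricSpace X] : Prop := thrDegSpace X < ⊤

/-- `x` is constructible from `S` in at most `m` steps: there is a finite sequence of
at most `m` points, each lying on a geodesic segment whose endpoints belong to `S`
together with the previously constructed points, ending at `x` (or `x ∈ S` with no
steps). -/
def ConstructibleIn {X : Type*} [MetricSpace X] (S : Set X) (x : X) (m : ℕ) : Prop :=
  ∃ (l : ℕ) (y : ℕ → X), l ≤ m ∧
    (∀ j < l, ∃ a, (a ∈ S ∨ ∃ i < j, y i = a) ∧
      ∃ b, (b ∈ S ∨ ∃ i < j, y i = b) ∧ y j ∈ segs a b) ∧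
    ((l = 0 ∧ x ∈ S) ∨ (0 < l ∧ y (l - 1) = x))

open Filter Topology

lemma mem_segs_iff {X : Type*} [MetricSpace X] {a b z : X} :
    z ∈ segs a b ↔ ∃ γ, IsGeodesic a b γ ∧ ∃ t ∈ Set.Icc (0 : ℝ) (dist a b), γ t = z := by
  simp [segs]

/-- Affine reparametrization of the points of a segment over `[0, 1]`. -/
lemma exists_param_of_mem_segs {X : Type*} [MetricSpace X] {a b z : X} (h : z ∈ segs a b) :
    ∃ γ, IsGeodesic a b γ ∧ ∃ t ∈ Set.Icc (0 : ℝ) 1, γ (t * dist a b) = z := by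
  obtain ⟨γ, hγ, s, hs, rfl⟩ := mem_segs_iff.1 h
  rcases (dist_nonneg (x := a) (y := b)).eq_or_lt with h0 | h0
  · refine ⟨γ, hγ, 0, by simp, ?_⟩
    have : s = 0 := le_antisymm (by rw [h0]; exact hs.2) hs.1
    simp [this]
  · refine ⟨γ, hγ, s / dist a b, ⟨div_nonneg hs.1 h0.le, (div_le_one h0).2 hs.2⟩, ?_⟩
    rw [div_mul_cancel₀ _ h0.ne']

lemma mul_dist_mem_Icc {X : Type*} [MetricSpace X] {a b : X} {t : ℝ}
    (ht : t ∈ Set.Icc (0 : ℝ) 1) : t * dist a b ∈ Set.Icc (0 : ℝ) (dist a b) :=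
  ⟨mul_nonneg ht.1 dist_nonneg, mul_le_of_le_one_left dist_nonneg ht.2⟩

lemma IsGeodesic.mem_segs {X : Type*} [MetricSpace X] {a b : X} {γ : ℝ → X}
    (hγ : IsGeodesic a b γ) {t : ℝ} (ht : t ∈ Set.Icc (0 : ℝ) 1) :
    γ (t * dist a b) ∈ segs a b :=
  mem_segs_iff.2 ⟨γ, hγ, _, mul_dist_mem_Icc ht, rfl⟩

lemma mem_thr_iff {X : Type*} [MetricSpace X] {S : Set X} {z : X} :
    z ∈ thr S ↔ ∃ a ∈ S, ∃ b ∈ S, z ∈ segs a b := by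
  simp [thr]

lemma gconvex_gconvHull {X : Type*} [MetricSpace X] (S : Set X) : GConvex (gconvHull S) :=
  fun a ha b hb _ hz C hC => hC.1 a (ha C hC) b (hb C hC) hz

lemma subset_gconvHull {X : Type*} [MetricSpace X] (S : Set X) : S ⊆ gconvHull S :=
  fun _ ha _ hC => hC.2 ha

/-- The infimum defining the threading degree is attained when it is finite. -/
lemma thr_iterate_of_thrDeg_eq {X : Type*} [MetricSpace X] {S : Set X} {k : ℕ}
    (h : thrDeg S = (k : ℕ∞)) : thr^[k] S = gconvHull S := by
  unfold thrDeg at h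
  have hne : ((fun n : ℕ => (n : ℕ∞)) '' {n : ℕ | thr^[n] S = gconvHull S}).Nonempty := by
    by_contra hne
    rw [Set.not_nonempty_iff_eq_empty.1 hne, sInf_empty] at h
    exact ENat.top_ne_natCast k h
  obtain ⟨m, hm, hmk⟩ := csInf_mem hne
  rw [h] at hmk
  have : m = k := Nat.cast_injective (R := ℕ∞) hmk
  exact this ▸ hm

/-- Threading preserves compactness. If `zₙ` divides `[aₙ, bₙ]` in the ratio `tₙ` and
`(aₙ, bₙ, tₙ) → (a, b, t)`, then the CAT(0) inequality bounds the squared distance from `zₙ` to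
the point dividing `[a, b]` in the ratio `t` by a quantity tending to `0`. -/
lemma isCompact_thr {X : Type*} [MetricSpace X] (hX : CAT0 X) {K : Set X} (hK : IsCompact K) :
    IsCompact (thr K) := by
  rw [isCompact_iff_isSeqCompact]
  intro z hz
  have h1 : ∀ m, ∃ p : X × X × ℝ, p ∈ K ×ˢ K ×ˢ Set.Icc (0 : ℝ) 1 ∧
      ∃ γ, IsGeodesic p.1 p.2.1 γ ∧ γ (p.2.2 * dist p.1 p.2.1) = z m := by
    intro m
    obtain ⟨a, ha, b, hb, hab⟩ := mem_thr_iff.1 (hz m)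
    obtain ⟨γ, hγ, t, ht, h⟩ := exists_param_of_mem_segs hab
    exact ⟨(a, b, t), ⟨ha, hb, ht⟩, γ, hγ, h⟩
  choose p hp γ hγ hpz using h1
  obtain ⟨⟨a, b, t⟩, ⟨ha, hb, ht⟩, φ, hφ, hlim⟩ :=
    (hK.prod (hK.prod isCompact_Icc)).isSeqCompact hp
  simp only at ha hb ht
  obtain ⟨g, hg⟩ := hX.1 a b
  refine ⟨g (t * dist a b), mem_thr_iff.2 ⟨a, ha, b, hb, hg.mem_segs ht⟩, φ, hφ, ?_⟩
  set c := g (t * dist a b) with hc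
  have htd := mul_dist_mem_Icc (a := a) (b := b) ht
  have hac : dist a c = t * dist a b := by
    have := hg.2.2 0 ⟨le_rfl, dist_nonneg⟩ _ htd
    rw [hg.1, zero_sub, abs_neg, abs_of_nonneg htd.1] at this
    exact this
  have hbc : dist b c = (1 - t) * dist a b := by
    have := hg.2.2 (dist a b) ⟨dist_nonneg, le_rfl⟩ _ htd
    rw [hg.2.1, abs_of_nonneg (sub_nonneg.2 htd.2)] at this
    rw [hc, this]; ring
  let F : X × X × ℝ → ℝ := fun q => (1 - q.2.2) * dist q.1 c ^ 2 + q.2.2 * dist q.2.1 c ^ 2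
    - q.2.2 * (1 - q.2.2) * dist q.1 q.2.1 ^ 2
  have hF : Continuous F := by fun_prop
  have hF0 : F (a, b, t) = 0 := by
    simp only [F, hac, hbc]; ring
  have hFlim : Tendsto (fun m => F (p (φ m))) atTop (𝓝 0) := by
    rw [← hF0]; exact (hF.tendsto _).comp hlim
  have hsq : Tendsto (fun m => dist (z (φ m)) c ^ 2) atTop (𝓝 0) :=
    squeeze_zero (fun _ => sq_nonneg _) (fun m => by
      rw [← hpz]
      exact hX.2 _ _ c _ (hγ (φ m)) _ (hp (φ m)).2.2) hFlim
  rw [tendsto_iff_dist_tendsto_zero]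
  have := hsq.sqrt
  simpa [Real.sqrt_sq dist_nonneg] using this

lemma isCompact_thr_iterate {X : Type*} [MetricSpace X] (hX : CAT0 X) {K : Set X}
    (hK : IsCompact K) (k : ℕ) : IsCompact (thr^[k] K) := by
  induction k with
  | zero => exact hK
  | succ k ih => rw [Function.iterate_succ_apply']; exact isCompact_thr hX ih

/-- The angle at a nearest point `p` of `z` in a convex set is obtuse. -/
lemma CAT0.dist_sq_add_dist_sq_le {X : Type*} [MetricSpace X] (hX : CAT0 X) {K : Set X}
    (hK : GConvex K) {z p q : X} (hp : p ∈ K) (hq : q ∈ K)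
    (hmin : ∀ y ∈ K, dist z p ≤ dist z y) :
    dist p q ^ 2 + dist z p ^ 2 ≤ dist z q ^ 2 := by
  obtain ⟨γ, hγ⟩ := hX.1 p q
  have key : ∀ t ∈ Set.Ioc (0 : ℝ) 1, dist z p ^ 2 + (1 - t) * dist p q ^ 2 ≤ dist z q ^ 2 := by
    intro t ht
    have ht' : t ∈ Set.Icc (0 : ℝ) 1 := ⟨ht.1.le, ht.2⟩
    have h1 := hX.2 p q z γ hγ t ht'
    have h2 := hmin _ (hK p hp q hq (hγ.mem_segs ht'))
    have h3 : dist z p ^ 2 ≤ dist z (γ (t * dist p q)) ^ 2 := by gcongr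
    rw [dist_comm _ z, dist_comm p z, dist_comm q z] at h1
    refine le_of_mul_le_mul_left ?_ ht.1
    linarith
  -- `key` is the comparison inequality divided by `t`; let `t` tend to `0` from the right.
  have hlim : Tendsto (fun t : ℝ => dist z p ^ 2 + (1 - t) * dist p q ^ 2) (𝓝[>] 0)
      (𝓝 (dist z p ^ 2 + (1 - 0) * dist p q ^ 2)) :=
    (Continuous.tendsto (by fun_prop) 0).mono_left nhdsWithin_le_nhds
  have := le_of_tendsto hlim
    (mem_of_superset (Ioc_mem_nhdsGT (zero_lt_one' ℝ)) key)
  linarith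

lemma constructibleIn_of_mem_thr_iterate {X : Type*} [MetricSpace X] {S : Set X} (k : ℕ) :
    ∀ z ∈ thr^[k] S, ConstructibleIn S z (2 ^ k - 1) := by
  induction k with
  | zero => exact fun z hz => ⟨0, fun _ => z, by simp, by simp, Or.inl ⟨rfl, hz⟩⟩
  | succ k ih =>
    intro z hz
    rw [Function.iterate_succ_apply'] at hz
    obtain ⟨a, ha, b, hb, hab⟩ := mem_thr_iff.1 hz
    obtain ⟨l₁, y₁, hl₁, hy₁, he₁⟩ := ih a ha
    obtain ⟨l₂, y₂, hl₂, hy₂, he₂⟩ := ih b hb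
    let y : ℕ → X := fun j => if j < l₁ then y₁ j else if j < l₁ + l₂ then y₂ (j - l₁) else z
    have e₁ : ∀ j < l₁, y j = y₁ j := fun j hj => if_pos hj
    have e₂ : ∀ j < l₂, y (l₁ + j) = y₂ j := fun j hj => by
      simp [y, hj]
    have e₃ : y (l₁ + l₂) = z := by simp [y]
    refine ⟨l₁ + l₂ + 1, y, ?_, ?_, Or.inr ⟨by omega, e₃⟩⟩
    · have := Nat.one_le_two_pow (n := k)
      rw [pow_succ]; omega
    · intro j hj
      rcases lt_or_ge j l₁ with h | h
      · have lift : ∀ c, (c ∈ S ∨ ∃ i < j, y₁ i = c) → (c ∈ S ∨ ∃ i < j, y i = c) := by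
          rintro c (hc | ⟨i, hi, rfl⟩)
          · exact Or.inl hc
          · exact Or.inr ⟨i, hi, e₁ i (hi.trans h)⟩
        obtain ⟨c, hc, d, hd, hcd⟩ := hy₁ j h
        exact ⟨c, lift c hc, d, lift d hd, by rwa [e₁ j h]⟩
      obtain ⟨j, rfl⟩ := Nat.exists_eq_add_of_le h
      rcases lt_or_ge j l₂ with h' | h'
      · have lift : ∀ c, (c ∈ S ∨ ∃ i < j, y₂ i = c) → (c ∈ S ∨ ∃ i < l₁ + j, y i = c) := by
          rintro c (hc | ⟨i, hi, rfl⟩)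
          · exact Or.inl hc
          · exact Or.inr ⟨l₁ + i, by omega, e₂ i (hi.trans h')⟩
        obtain ⟨c, hc, d, hd, hcd⟩ := hy₂ j h'
        exact ⟨c, lift c hc, d, lift d hd, by rwa [e₂ j h']⟩
      obtain rfl : j = l₂ := by omega
      refine ⟨a, ?_, b, ?_, by rwa [e₃]⟩
      · rcases he₁ with ⟨-, h⟩ | ⟨h, rfl⟩
        · exact Or.inl h
        · exact Or.inr ⟨l₁ - 1, by omega, e₁ _ (by omega)⟩
      · rcases he₂ with ⟨-, h⟩ | ⟨h, rfl⟩
        · exact Or.inl h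
        · exact Or.inr ⟨l₁ + (j - 1), by omega, e₂ _ (by omega)⟩

/-- In a complete CAT(0) space of finite type, the Fréchet mean of a finite set `S`
lies in `co S = thr^k S` where `k = deg_thr S`, and is constructible from `S` in at
most `2^k - 1` steps. -/
theorem frechetMean_constructible {X : Type*} [MetricSpace X] [CompleteSpace X]
    (hX : CAT0 X) (hft : FiniteType X) (n : ℕ) (x : Fin n → X) (w : Fin n → ℝ)
    (hw0 : ∀ i, 0 ≤ w i) (hw1 : ∀ i, w i ≤ 1) (hwne : ∃ i, w i ≠ 0) (xstar : X)
    (hmin : ∀ y : X, ∑ i, w i * dist xstar (x i) ^ 2 ≤ ∑ i, w i * dist y (x i) ^ 2) :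
    xstar ∈ gconvHull (Set.range x) ∧
      ∀ k : ℕ, thrDeg (Set.range x) = (k : ℕ∞) →
        thr^[k] (Set.range x) = gconvHull (Set.range x) ∧
        xstar ∈ thr^[k] (Set.range x) ∧
        ConstructibleIn (Set.range x) xstar (2 ^ k - 1) := by
  have hmem : xstar ∈ gconvHull (Set.range x) := by
    -- Finite type enters through the resulting finite threading degree of `Set.range x`.
    have hdeg : thrDeg (Set.range x) < ⊤ := (le_iSup (fun S : Set X => thrDeg S) _).trans_lt hft
    obtain ⟨k, hk⟩ := ENat.ne_top_iff_exists.1 hdeg.ne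
    have hcpt : IsCompact (gconvHull (Set.range x)) := by
      rw [← thr_iterate_of_thrDeg_eq hk.symm]
      exact isCompact_thr_iterate hX (Set.finite_range x).isCompact k
    obtain ⟨i₀, hi₀⟩ := hwne
    have hx : ∀ i, x i ∈ gconvHull (Set.range x) := fun i =>
      subset_gconvHull _ (Set.mem_range_self i)
    obtain ⟨p, hp, hpmin⟩ := hcpt.exists_isMinOn ⟨_, hx i₀⟩
      (f := fun y => dist xstar y) (by fun_prop)
    have hobt : ∀ i, dist p (x i) ^ 2 + dist xstar p ^ 2 ≤ dist xstar (x i) ^ 2 := fun i =>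
      hX.dist_sq_add_dist_sq_le (gconvex_gconvHull _) hp (hx i) (fun y hy => hpmin hy)
    have hsum : ∑ i, w i * dist p (x i) ^ 2 + (∑ i, w i) * dist xstar p ^ 2 ≤
        ∑ i, w i * dist xstar (x i) ^ 2 := by
      rw [Finset.sum_mul, ← Finset.sum_add_distrib]
      refine Finset.sum_le_sum fun i _ => ?_
      rw [← mul_add]
      exact mul_le_mul_of_nonneg_left (hobt i) (hw0 i)
    have hW : 0 < ∑ i, w i :=
      Finset.sum_pos' (fun i _ => hw0 i) ⟨i₀, Finset.mem_univ _, (hw0 i₀).lt_of_ne' hi₀⟩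
    have hle : (∑ i, w i) * dist xstar p ^ 2 ≤ 0 := by linarith [hmin p]
    have hd : dist xstar p ^ 2 = 0 :=
      le_antisymm (nonpos_of_mul_nonpos_right hle hW) (sq_nonneg _)
    rwa [dist_eq_zero.1 (pow_eq_zero_iff two_ne_zero |>.1 hd)]
  refine ⟨hmem, fun k hk => ?_⟩
  have hthr := thr_iterate_of_thrDeg_eq hk
  have hmem' : xstar ∈ thr^[k] (Set.range x) := by rwa [hthr]
  exact ⟨hthr, hmem', constructibleIn_of_mem_thr_iterate k _ hmem'⟩
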